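/- Let R be a Dedekind domain with torsion class group, |Cl(R)| ≠ 2, and O ⊆ R an order with conductor f, R/f finite, every class of Cl(R) containing a prime coprime to f. If O·R^× = R and v_p(u) = 1 for all atoms u of O_p and all p ∈ Spec(O), then the inclusion O^• ↪ R^• is a transfer homomorphism; in particular O is transfer Krull and there is a transfer homomorphism O^• → B(Cl(R)). -/

import Mathlib

open scoped nonZeroDivisors

section MonoidDefs
variable {H B : Type*} [CommMonoid H] [CommMonoid B]

/-- The set of lengths of `a`: `{0}` for units, otherwise the set of `k` such that
`a` is a product of `k` atoms (irreducible elements). -/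
def lengthsSet (a : H) : Set ℕ :=
  {k | (IsUnit a ∧ k = 0) ∨
    (¬ IsUnit a ∧ ∃ l : Multiset H, Multiset.card l = k ∧ (∀ x ∈ l, Irreducible x) ∧ l.prod = a)}

/-- A transfer homomorphism: (T1) `B = θ(H)·B^×` and `θ⁻¹(B^×) = H^×`;
(T2) factorizations of `θ u` lift to factorizations of `u` up to associates. -/
def IsTransferHom (θ : H →* B) : Prop :=
  (∀ b : B, ∃ u : H, ∃ ε : Bˣ, b = θ u * ε) ∧
  (∀ u : H, IsUnit (θ u) → IsUnit u) ∧
  (∀ u : H, ∀ b c : B, θ u = b * c →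
    ∃ v w : H, u = v * w ∧ Associated (θ v) b ∧ Associated (θ w) c)

/-- A Krull monoid: a monoid admitting a divisor homomorphism into a
free abelian monoid. -/
def IsKrullMonoid (H : Type*) [CommMonoid H] : Prop :=
  ∃ (ι : Type) (d : H →* Multiplicative (ι →₀ ℕ)), ∀ a b : H, d a ∣ d b → a ∣ b

/-- Half-factorial: all factorizations of an element into atoms have the same length. -/
def IsHalfFactorial (A : Type*) [CommMonoid A] : Prop :=
  ∀ (a : A) (l m : Multiset A), (∀ x ∈ l, Irreducible x) → (∀ x ∈ m, Irreducible x) →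
    l.prod = a → m.prod = a → Multiset.card l = Multiset.card m

/-- An absolutely irreducible element: an atom all of whose powers factor uniquely
into atoms, up to associates. -/
def AbsolutelyIrreducible (a : H) : Prop :=
  Irreducible a ∧ ∀ n : ℕ, 0 < n → ∀ l m : Multiset H,
    (∀ x ∈ l, Irreducible x) → (∀ x ∈ m, Irreducible x) →
    l.prod = a ^ n → m.prod = a ^ n → Multiset.Rel Associated l m

end MonoidDefs

section RingDefs
variable {R : Type*} [CommRing R]

/-- The conductor of a subring `O ⊆ R`: the largest ideal of `R` contained in `O`. -/
def Subring.conductor (O : Subring R) : Ideal R where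
  carrier := {x | ∀ r : R, x * r ∈ O}
  add_mem' := by
    intro a b ha hb r
    have h : (a + b) * r = a * r + b * r := by ring
    rw [h]; exact O.add_mem (ha r) (hb r)
  zero_mem' := by intro r; simpa using O.zero_mem
  smul_mem' := by
    intro c x hx r
    have h : c • x * r = x * (c * r) := by simp [smul_eq_mul]; ring
    rw [h]; exact hx (c * r)

/-- `a` is a regular element modulo the ideal `f`. -/
def RegF (f : Ideal R) (a : R) : Prop := IsUnit (Ideal.Quotient.mk f a)

end RingDefs

open Classical in
/-- The `P`-adic valuation of `a`: the multiplicity of the prime ideal `P` in the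
factorization of the ideal `aR`. -/
noncomputable def idealVal {R : Type*} [CommRing R] [IsDomain R] [IsDedekindDomain R]
    (P : Ideal R) (a : R) : ℕ :=
  Multiset.count P (UniqueFactorizationMonoid.normalizedFactors (Ideal.span {a}))

/-- `a ∈ O` maps to an atom of the localization of `O` at the prime `P ∩ O`. -/
def IsLocalAtom {R : Type*} [CommRing R] (O : Subring R) (P : Ideal R)
    (hq : (Ideal.comap (Subring.subtype O) P).IsPrime) (a : ↥O) : Prop :=
  Irreducible (algebraMap ↥O
    (@Localization.AtPrime ↥O _ (Ideal.comap (Subring.subtype O) P) hq) a)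

/-- The inclusion `O^∙ ↪ R^∙` is a transfer homomorphism. -/
def InclusionIsTransferHom {R : Type*} [CommRing R] (O : Subring R) : Prop :=
  (∀ r : R, r ≠ 0 → ∃ (a : ↥O) (ε : Rˣ), r = (a : R) * (ε : R)) ∧
  (∀ a : ↥O, IsUnit ((a : R)) → IsUnit a) ∧
  (∀ a : ↥O, ∀ b c : R, (a : R) = b * c →
    ∃ v w : ↥O, a = v * w ∧ Associated ((v : R)) b ∧ Associated ((w : R)) c)

/-- The monoid of zero-sum sequences over `G`, as a submonoid of the free abelian
monoid of multisets over `G`. -/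
def BlockMonoid (G : Type*) [CommGroup G] : Submonoid (Multiplicative (Multiset G)) where
  carrier := {x | (Multiplicative.toAdd x).prod = 1}
  one_mem' := by simp
  mul_mem' := by
    intro a b ha hb
    simp only [Set.mem_setOf_eq, toAdd_mul, Multiset.prod_add] at *
    rw [ha, hb, one_mul]

section Helpers
set_option linter.overlappingInstances false
open UniqueFactorizationMonoid

variable {R : Type*} [CommRing R] [IsDomain R] [IsDedekindDomain R]

theorem idealVal_mul_aux (P : Ideal R) {a b : R} (ha : a ≠ 0) (hb : b ≠ 0) :
    idealVal P (a * b) = idealVal P a + idealVal P b := by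
  classical
  unfold idealVal
  rw [← Ideal.span_singleton_mul_span_singleton, normalizedFactors_mul, Multiset.count_add]
  · simpa using ha
  · simpa using hb

theorem idealVal_pos_aux (P : Ideal R) (hP : P.IsPrime) (hP0 : P ≠ ⊥) {a : R} (ha : a ≠ 0) :
    0 < idealVal P a ↔ a ∈ P := by
  classical
  unfold idealVal
  rw [Multiset.count_pos, Ideal.mem_normalizedFactors_iff (by simpa using ha)]
  simp [hP, Ideal.span_singleton_le_iff_mem]

theorem idealVal_zero_aux (P : Ideal R) (hP : P.IsPrime) (hP0 : P ≠ ⊥) {a : R} (ha : a ≠ 0) :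
    idealVal P a = 0 ↔ a ∉ P := by
  rw [← idealVal_pos_aux P hP hP0 ha]; omega

theorem span_decomp_aux (P : Ideal R) (hP : P.IsPrime) (hP0 : P ≠ ⊥) {a : R} (ha : a ≠ 0) :
    ∃ K : Ideal R, Ideal.span {a} = P ^ (idealVal P a) * K ∧ ¬ K ≤ P := by
  classical
  have hpr : Prime P := (Ideal.prime_iff_isPrime hP0).2 hP
  have h0 : Ideal.span {a} ≠ (0 : Ideal R) := by simpa using ha
  have hf : FiniteMultiplicity P (Ideal.span {a}) :=
    FiniteMultiplicity.of_prime_left hpr h0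
  obtain ⟨K, hK, hn⟩ := hf.exists_eq_pow_mul_and_not_dvd
  have : idealVal P a = multiplicity P (Ideal.span {a}) := by
    unfold idealVal
    apply Ideal.count_normalizedFactors_eq
    · exact Ideal.dvd_iff_le.1 (pow_multiplicity_dvd _ _)
    · rw [← Ideal.dvd_iff_le]
      exact hf.not_pow_dvd_of_multiplicity_lt (Nat.lt_succ_self _)
  refine ⟨K, by rw [this]; exact hK, ?_⟩
  rwa [← Ideal.dvd_iff_le]

theorem exists_cross_aux (P : Ideal R) (hP : P.IsPrime) (hP0 : P ≠ ⊥) {v b : R} (hv : v ≠ 0)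
    (hb : b ≠ 0) (h : idealVal P v = idealVal P b) :
    ∃ x y : R, x ∉ P ∧ y ∉ P ∧ x * v = y * b := by
  obtain ⟨J, hJ, -⟩ := span_decomp_aux P hP hP0 hv
  obtain ⟨K, hK, hKP⟩ := span_decomp_aux P hP hP0 hb
  obtain ⟨k, hk, hkP⟩ := Set.not_subset.1 hKP
  have hkv : k * v ∈ Ideal.span {b} := by
    have h1 : v ∈ P ^ idealVal P b := by
      have h2 : Ideal.span {v} ≤ P ^ idealVal P b := by
        rw [← h]; exact hJ.le.trans Ideal.mul_le_left
      exact h2 (Ideal.mem_span_singleton_self v)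
    rw [hK, mul_comm k v]
    exact Ideal.mul_mem_mul h1 hk
  obtain ⟨y, hy⟩ := Ideal.mem_span_singleton'.1 hkv
  have hk0 : k ≠ 0 := by rintro rfl; exact hkP P.zero_mem
  have hy0 : y ≠ 0 := by
    rintro rfl
    rw [zero_mul] at hy
    exact mul_ne_zero hk0 hv hy.symm
  refine ⟨k, y, hkP, ?_, hy.symm⟩
  rw [← idealVal_zero_aux P hP hP0 hy0]
  have := congrArg (idealVal P) hy
  rw [idealVal_mul_aux P hy0 hb, idealVal_mul_aux P hk0 hv, h,
    (idealVal_zero_aux P hP hP0 hk0).2 hkP] at this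
  omega

theorem local_split_one_aux (O : Subring R) (P : Ideal R) (hP : P.IsPrime) (hP0 : P ≠ ⊥)
    (hval : ∀ (hq : (Ideal.comap (Subring.subtype O) P).IsPrime) (a : ↥O),
        IsLocalAtom O P hq a → idealVal P (a : R) = 1) :
    ∀ (n : ℕ) (a : O), (a : R) ≠ 0 → (a : R) ∈ P → idealVal P (a : R) = n →
      ∃ u w s : O, (s : R) ∉ P ∧ idealVal P (u : R) = 1 ∧ u * w = s * a := by
  intro n
  induction n using Nat.strong_induction_on with
  | _ n ih =>
  intro a ha haP hn
  have hq : (Ideal.comap (Subring.subtype O) P).IsPrime := Ideal.IsPrime.comap _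
  by_cases hat : IsLocalAtom O P hq a
  · exact ⟨a, 1, 1, fun h => hP.ne_top ((Ideal.eq_top_iff_one _).2 h), hval hq a hat, by ring⟩
  · set p := Ideal.comap (Subring.subtype O) P with hp
    have hnu : ¬ IsUnit (algebraMap O (Localization.AtPrime p) a) := by
      rw [IsLocalization.AtPrime.isUnit_to_map_iff (Localization.AtPrime p) p]
      exact fun h => h haP
    unfold IsLocalAtom at hat
    rw [irreducible_iff] at hat
    push Not at hat
    obtain ⟨x, y, hxy, hx, hy⟩ := hat hnu
    obtain ⟨⟨b, s⟩, rfl⟩ := IsLocalization.mk'_surjective p.primeCompl x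
    obtain ⟨⟨c, t⟩, rfl⟩ := IsLocalization.mk'_surjective p.primeCompl y
    simp only at hxy hx hy
    rw [IsLocalization.AtPrime.isUnit_mk'_iff (Localization.AtPrime p) p] at hx hy
    have hb : (b : R) ∈ P := by
      by_contra h; exact hx h
    have hc : (c : R) ∈ P := by
      by_contra h; exact hy h
    rw [← IsLocalization.mk'_mul, eq_comm, IsLocalization.mk'_eq_iff_eq_mul, ← map_mul] at hxy
    have hinj := IsLocalization.injective (Localization.AtPrime p)
      (p.primeCompl_le_nonZeroDivisors)
    have hE := hinj hxy
    have hER : (b : R) * c = a * (s * t) := by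
      have := congrArg (Subtype.val) hE
      simpa using this
    have hs : ((s : O) : R) ∉ P := fun h => s.2 h
    have ht : ((t : O) : R) ∉ P := fun h => t.2 h
    have hs0 : ((s : O) : R) ≠ 0 := fun h => hs (h ▸ P.zero_mem)
    have ht0 : ((t : O) : R) ≠ 0 := fun h => ht (h ▸ P.zero_mem)
    have hbc0 : (b : R) * c ≠ 0 := by rw [hER]; exact mul_ne_zero ha (mul_ne_zero hs0 ht0)
    have hb0 := left_ne_zero_of_mul hbc0
    have hc0 := right_ne_zero_of_mul hbc0
    have hv := congrArg (idealVal P) hER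
    rw [idealVal_mul_aux P hb0 hc0, idealVal_mul_aux P ha (mul_ne_zero hs0 ht0),
      idealVal_mul_aux P hs0 ht0, (idealVal_zero_aux P hP hP0 hs0).2 hs,
      (idealVal_zero_aux P hP hP0 ht0).2 ht] at hv
    have hcp := (idealVal_pos_aux P hP hP0 hc0).2 hc
    obtain ⟨u, w, s', hs', hu, huw⟩ := ih (idealVal P (b : R)) (by omega) b hb0 hb rfl
    refine ⟨u, w * c, s' * (s * t), ?_, hu, ?_⟩
    · intro h
      push_cast at h
      rcases hP.mem_or_mem h with h | h
      · exact hs' h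
      · rcases hP.mem_or_mem h with h | h
        · exact hs h
        · exact ht h
    · rw [← mul_assoc, huw, mul_assoc, hE]; push_cast; ring

theorem local_split_aux (O : Subring R) (P : Ideal R) (hP : P.IsPrime) (hP0 : P ≠ ⊥)
    (hval : ∀ (hq : (Ideal.comap (Subring.subtype O) P).IsPrime) (a : ↥O),
        IsLocalAtom O P hq a → idealVal P (a : R) = 1) (a : O) (ha : (a : R) ≠ 0) :
    ∀ (i : ℕ), i ≤ idealVal P (a : R) →
      ∃ v w s : O, (s : R) ∉ P ∧ idealVal P (v : R) = i ∧ v * w = s * a := by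
  intro i
  induction i with
  | zero =>
    intro _
    have h1 : (1 : R) ∉ P := fun h => hP.ne_top ((Ideal.eq_top_iff_one _).2 h)
    exact ⟨1, a, 1, h1, (idealVal_zero_aux P hP hP0 one_ne_zero).2 h1, rfl⟩
  | succ i ih =>
    intro hi
    obtain ⟨v, w, s, hs, hv, hvw⟩ := ih (by omega)
    have hs0 : (s : R) ≠ 0 := fun h => hs (h ▸ P.zero_mem)
    have hE : (v : R) * w = s * a := by
      simpa using congrArg Subtype.val hvw
    have h0 : (v : R) * w ≠ 0 := by rw [hE]; exact mul_ne_zero hs0 ha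
    have hv0 := left_ne_zero_of_mul h0
    have hw0 := right_ne_zero_of_mul h0
    have hc := congrArg (idealVal P) hE
    rw [idealVal_mul_aux P hv0 hw0, idealVal_mul_aux P hs0 ha,
      (idealVal_zero_aux P hP hP0 hs0).2 hs] at hc
    have hwP : (w : R) ∈ P := (idealVal_pos_aux P hP hP0 hw0).1 (by omega)
    obtain ⟨u, w', s', hs', hu, huw⟩ :=
      local_split_one_aux O P hP hP0 hval _ w hw0 hwP rfl
    have hs'0 : (s' : R) ≠ 0 := fun h => hs' (h ▸ P.zero_mem)
    have hE' : (u : R) * w' = s' * w := by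
      simpa using congrArg Subtype.val huw
    have hu0 : (u : R) ≠ 0 := by
      apply left_ne_zero_of_mul (b := (w' : R))
      rw [hE']; exact mul_ne_zero hs'0 hw0
    refine ⟨v * u, w', s' * s, ?_, ?_, ?_⟩
    · intro h
      push_cast at h
      rcases hP.mem_or_mem h with h | h
      · exact hs' h
      · exact hs h
    · push_cast
      rw [idealVal_mul_aux P hv0 hu0, hv, hu]
    · rw [mul_assoc, huw, mul_assoc, ← hvw]; ring

theorem conductor_ne_bot_aux (O : Subring R) (hne : O ≠ ⊤)
    (hfrac : ∀ r : R, ∃ a b : ↥O, (b : R) ≠ 0 ∧ (b : R) * r = (a : R))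
    (hfin : Finite (R ⧸ O.conductor)) : O.conductor ≠ ⊥ := by
  intro h
  rw [h] at hfin
  have : Finite R := Finite.of_equiv _ (RingEquiv.quotientBot R).toEquiv
  apply hne
  rw [eq_top_iff]
  intro r _
  obtain ⟨a, b, hb, hE⟩ := hfrac r
  have hu : IsUnit (b : R) := by
    have := Finite.isField_of_domain R
    obtain ⟨c, hc⟩ := this.mul_inv_cancel hb
    exact IsUnit.of_mul_eq_one c hc
  obtain ⟨n, hn, hpow⟩ : ∃ n, 0 < n ∧ (b : R) ^ n = 1 := by
    obtain ⟨u, hu⟩ := hu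
    refine ⟨Nat.card Rˣ, Nat.card_pos, ?_⟩
    rw [← hu, ← Units.val_pow_eq_pow_val, pow_card_eq_one']
    simp
  have : r = (b : R) ^ (n - 1) * a := by
    rw [← hE, ← mul_assoc, ← pow_succ, Nat.sub_add_cancel hn, hpow, one_mul]
  rw [this]
  exact O.mul_mem (O.pow_mem b.2 _) a.2

/-- `O` is the intersection of its localizations at primes containing the conductor. -/
theorem mem_of_local_aux (O : Subring R) (hint : Algebra.IsIntegral O R) (x : R)
    (h : ∀ P : Ideal R, P.IsPrime → O.conductor ≤ P → ∃ s : O, (s : R) ∉ P ∧ (s : R) * x ∈ O) :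
    x ∈ O := by
  let I : Ideal O :=
    { carrier := {s | (s : R) * x ∈ O}
      add_mem' := by
        intro a b ha hb
        simp only [Set.mem_setOf_eq] at *
        push_cast
        rw [add_mul]; exact O.add_mem ha hb
      zero_mem' := by simp [O.zero_mem]
      smul_mem' := by
        intro c y hy
        simp only [Set.mem_setOf_eq, smul_eq_mul] at *
        push_cast
        rw [mul_assoc]; exact O.mul_mem c.2 hy }
  have hI : ∀ s : O, s ∈ I ↔ (s : R) * x ∈ O := fun s => Iff.rfl
  by_cases htop : I = ⊤
  · have := (hI 1).1 (by rw [htop]; trivial)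
    simpa using this
  · exfalso
    obtain ⟨m, hm, hIm⟩ := Ideal.exists_le_maximal I htop
    obtain ⟨P, hPmax, hPm⟩ := Ideal.exists_ideal_over_maximal_of_isIntegral (S := R) m
      (by
        rw [(RingHom.injective_iff_ker_eq_bot _).1 (FaithfulSMul.algebraMap_injective O R)]
        exact bot_le)
    have hmem : ∀ s : O, s ∈ m ↔ (s : R) ∈ P := by
      intro s; rw [← hPm]; rfl
    by_cases hf : O.conductor ≤ P
    · obtain ⟨s, hs, hsx⟩ := h P hPmax.isPrime hf
      exact hs ((hmem s).1 (hIm ((hI s).2 hsx)))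
    · obtain ⟨z, hz, hzP⟩ := Set.not_subset.1 hf
      have hzO : z ∈ O := by simpa using hz 1
      exact hzP ((hmem ⟨z, hzO⟩).1 (hIm ((hI ⟨z, hzO⟩).2 (hz x))))

end Helpers
section Helpers2
set_option linter.overlappingInstances false
open UniqueFactorizationMonoid

variable {R : Type*} [CommRing R] [IsDomain R] [IsDedekindDomain R]

theorem ideal_decomp_aux (P I : Ideal R) (hP : P.IsPrime) (hP0 : P ≠ ⊥) (hI : I ≠ ⊥) :
    ∃ (e : ℕ) (K : Ideal R), I = P ^ e * K ∧ ¬ K ≤ P := by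
  have hpr : Prime P := (Ideal.prime_iff_isPrime hP0).2 hP
  have hf : FiniteMultiplicity P I := FiniteMultiplicity.of_prime_left hpr hI
  obtain ⟨K, hK, hn⟩ := hf.exists_eq_pow_mul_and_not_dvd
  exact ⟨_, K, hK, by rwa [← Ideal.dvd_iff_le]⟩

theorem mem_pow_of_mul_aux (P : Ideal R) (hP : P.IsPrime) (hP0 : P ≠ ⊥) (e : ℕ) (x : R)
    (hx : x ∉ P) : ∃ x' : R, x * x' - 1 ∈ P ^ e := by
  have hmax : P.IsMaximal := hP.isMaximal hP0
  have h1 : IsCoprime P (Ideal.span {x}) := by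
    obtain ⟨z, i, hi, hz⟩ := hmax.exists_inv hx
    exact Ideal.isCoprime_iff_exists.2
      ⟨i, hi, z * x, Ideal.mem_span_singleton'.2 ⟨z, rfl⟩, by rw [add_comm]; exact hz⟩
  have h2 : IsCoprime (P ^ e) (Ideal.span {x}) := h1.pow_left
  obtain ⟨i, hi, j, hj, hij⟩ := Ideal.isCoprime_iff_exists.1 h2
  obtain ⟨x', rfl⟩ := Ideal.mem_span_singleton'.1 hj
  refine ⟨x', ?_⟩
  have : x * x' - 1 = -i := by rw [← hij]; ring
  rw [this]; exact neg_mem hi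

theorem cancel_pow_aux (P : Ideal R) (hP : P.IsPrime) (hP0 : P ≠ ⊥) (e : ℕ) (x z : R)
    (hx : x ∉ P) (h : x * z ∈ P ^ e) : z ∈ P ^ e := by
  obtain ⟨x', hx'⟩ := mem_pow_of_mul_aux P hP hP0 e x hx
  have : z = x' * (x * z) - z * (x * x' - 1) := by ring
  rw [this]
  exact sub_mem (Ideal.mul_mem_left _ _ h) (Ideal.mul_mem_left _ _ hx')

theorem inclusion_aux (O : Subring R) (hne : O ≠ ⊤) (hfg : Module.Finite ↥O R)
    (hfrac : ∀ r : R, ∃ a b : ↥O, (b : R) ≠ 0 ∧ (b : R) * r = (a : R))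
    (hfin : Finite (R ⧸ O.conductor))
    (hOR : ∀ r : R, ∃ ε : Rˣ, (ε : R) * r ∈ O)
    (hval : ∀ (P : Ideal R), P.IsPrime → P ≠ ⊥ →
      ∀ (hq : (Ideal.comap (Subring.subtype O) P).IsPrime) (a : ↥O),
        IsLocalAtom O P hq a → idealVal P (a : R) = 1)
    (a : O) (b c : R) (ha : (a : R) ≠ 0) (habc : (a : R) = b * c) :
    ∃ ε : Rˣ, (ε : R) * b ∈ O ∧ (↑ε⁻¹ : R) * c ∈ O := by
  classical
  have hint : Algebra.IsIntegral O R := inferInstance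
  have hf0 := conductor_ne_bot_aux O hne hfrac hfin
  have hb0 : b ≠ 0 := by rintro rfl; simp at habc; exact ha (by simpa using habc)
  have hc0 : c ≠ 0 := by rintro rfl; simp at habc; exact ha (by simpa using habc)
  let S : Finset (Ideal R) := (normalizedFactors O.conductor).toFinset
  have hS : ∀ P, P ∈ S ↔ P.IsPrime ∧ O.conductor ≤ P := by
    intro P
    simp only [S, Multiset.mem_toFinset]
    exact Ideal.mem_normalizedFactors_iff hf0
  have hne0 : ∀ P ∈ S, P ≠ ⊥ := by
    rintro P hP rfl
    exact hf0 (le_bot_iff.1 ((hS _).1 hP).2)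
  have hdata : ∀ P ∈ S, ∃ (e : ℕ) (K : Ideal R) (v w s : O) (x y r : R),
      O.conductor = P ^ e * K ∧ ¬ K ≤ P ∧ (s : R) ∉ P ∧ v * w = s * a ∧
      x ∉ P ∧ y ∉ P ∧ x * v = y * b ∧ r * x - y ∈ P ^ e := by
    intro P hPS
    have hP := ((hS P).1 hPS).1
    have hP0 := hne0 P hPS
    obtain ⟨e, K, hK, hKP⟩ := ideal_decomp_aux P O.conductor hP hP0 hf0
    have hle : idealVal P b ≤ idealVal P (a : R) := by
      rw [habc, idealVal_mul_aux P hb0 hc0]; omega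
    obtain ⟨v, w, s, hs, hv, hvw⟩ := local_split_aux O P hP hP0 (hval P hP hP0) a ha _ hle
    have hs0 : (s : R) ≠ 0 := fun h => hs (h ▸ P.zero_mem)
    have hv0 : (v : R) ≠ 0 := by
      apply left_ne_zero_of_mul (b := (w : R))
      have : (v : R) * w = s * a := by simpa using congrArg Subtype.val hvw
      rw [this]; exact mul_ne_zero hs0 ha
    obtain ⟨x, y, hx, hy, hxy⟩ := exists_cross_aux P hP hP0 hv0 hb0 hv
    obtain ⟨x', hx'⟩ := mem_pow_of_mul_aux P hP hP0 e x hx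
    refine ⟨e, K, v, w, s, x, y, x' * y, hK, hKP, hs, hvw, hx, hy, hxy, ?_⟩
    have : x' * y * x - y = y * (x * x' - 1) := by ring
    rw [this]; exact Ideal.mul_mem_left _ _ hx'
  choose! e K v w s x y r₀ hK hKP hs hvw hx hy hxy hr₀ using hdata
  obtain ⟨r, hr⟩ := IsDedekindDomain.exists_forall_sub_mem_ideal (s := S) (fun P => P) e
    (fun P hP => (Ideal.prime_iff_isPrime (hne0 P hP)).2 ((hS P).1 hP).1)
    (fun P _ Q _ h => h) (fun P => r₀ P)
  simp only at hr
  have hrx : ∀ P ∈ S, r * x P - y P ∈ P ^ e P := by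
    intro P hP
    have : r * x P - y P = x P * (r - r₀ P) + (r₀ P * x P - y P) := by ring
    rw [this]
    exact add_mem (Ideal.mul_mem_left _ _ (hr P hP)) (hr₀ P hP)
  have he : ∀ P ∈ S, e P ≠ 0 := by
    intro P hP h0
    have := hK P hP
    rw [h0, pow_zero, one_mul] at this
    exact hKP P hP (this ▸ ((hS P).1 hP).2)
  have hrP : ∀ P ∈ S, r ∉ P := by
    intro P hP h
    have h1 : r * x P - y P ∈ P := Ideal.pow_le_self (he P hP) (hrx P hP)
    have h2 : r * x P ∈ P := Ideal.mul_mem_right _ _ h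
    exact hy P hP (by simpa using sub_mem h2 h1)
  have ht : ∀ P ∈ S, ∃ t : O, (t : R) ∉ P ∧ ∀ z ∈ P ^ e P, (t : R) * z ∈ O := by
    intro P hP
    obtain ⟨k, hk, hkP⟩ := Set.not_subset.1 (hKP P hP)
    obtain ⟨ε, hε⟩ := hOR k
    refine ⟨⟨(ε : R) * k, hε⟩, ?_, ?_⟩
    · intro h
      rcases ((hS P).1 hP).1.mem_or_mem h with h | h
      · exact ((hS P).1 hP).1.ne_top (Ideal.eq_top_of_isUnit_mem _ h ε.isUnit)
      · exact hkP h
    · intro z hz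
      have : z * k ∈ O.conductor := by
        rw [hK P hP]; exact Ideal.mul_mem_mul hz hk
      have h2 := this ε
      have h3 : (ε : R) * k * z = z * k * ε := by ring
      simpa only [h3] using h2
  obtain ⟨η, hη⟩ := hOR r
  refine ⟨η⁻¹, ?_, ?_⟩
  · apply mem_of_local_aux O hint
    intro P hP hcP
    have hPS : P ∈ S := (hS P).2 ⟨hP, hcP⟩
    obtain ⟨t, htP, htz⟩ := ht P hPS
    refine ⟨t * ⟨_, hη⟩, ?_, ?_⟩
    · intro h
      rcases hP.mem_or_mem h with h | h
      · exact htP h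
      · rcases hP.mem_or_mem h with h | h
        · exact hP.ne_top (Ideal.eq_top_of_isUnit_mem _ h η.isUnit)
        · exact hrP P hPS h
    · have h1 : r * b - (v P : R) ∈ P ^ e P := by
        apply cancel_pow_aux P hP (hne0 P hPS) _ (y P) _ (hy P hPS)
        have : y P * (r * b - (v P : R)) = (v P : R) * (r * x P - y P) := by
          linear_combination (-r) * hxy P hPS
        rw [this]
        exact Ideal.mul_mem_left _ _ (hrx P hPS)
      have h2 := O.add_mem (htz _ h1) (O.mul_mem t.2 (v P).2)
      have h3 : ((t * ⟨(η : R) * r, hη⟩ : O) : R) * (((η⁻¹ : Rˣ) : R) * b)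
          = (t : R) * (r * b - (v P : R)) + t * v P := by
        have : (η : R) * ((η⁻¹ : Rˣ) : R) = 1 := η.mul_inv
        push_cast
        linear_combination (t * r * b : R) * this
      rw [h3]; exact h2
  · rw [inv_inv]
    apply mem_of_local_aux O hint
    intro P hP hcP
    have hPS : P ∈ S := (hS P).2 ⟨hP, hcP⟩
    obtain ⟨t, htP, htz⟩ := ht P hPS
    refine ⟨t * s P, ?_, ?_⟩
    · intro h
      rcases hP.mem_or_mem h with h | h
      · exact htP h
      · exact hs P hPS h
    · have hE : (v P : R) * w P = s P * (b * c) := by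
        rw [← habc]; simpa using congrArg Subtype.val (hvw P hPS)
      have hE2 : (s P : R) * x P * c = y P * w P := by
        apply mul_left_cancel₀ hb0
        linear_combination (-(x P)) * hE + (w P : R) * hxy P hPS
      have h1 : (s P : R) * η * c - (η * r) * w P ∈ P ^ e P := by
        apply cancel_pow_aux P hP (hne0 P hPS) _ (y P) _ (hy P hPS)
        have : y P * ((s P : R) * η * c - (η * r) * w P)
            = (-(s P * η * c : R)) * (r * x P - y P) := by
          linear_combination (η * r : R) * hE2
        rw [this]
        exact Ideal.mul_mem_left _ _ (hrx P hPS)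
      have h2 := O.add_mem (htz _ h1) (O.mul_mem t.2 (O.mul_mem hη (w P).2))
      have h3 : ((t * s P : O) : R) * ((η : R) * c)
          = (t : R) * ((s P : R) * η * c - (η * r) * w P) + t * ((η * r) * w P) := by
        push_cast; ring
      rw [h3]; exact h2

theorem inclusion_transfer_aux (O : Subring R) (hne : O ≠ ⊤) (hfg : Module.Finite ↥O R)
    (hfrac : ∀ r : R, ∃ a b : ↥O, (b : R) ≠ 0 ∧ (b : R) * r = (a : R))
    (hfin : Finite (R ⧸ O.conductor))
    (hOR : ∀ r : R, ∃ ε : Rˣ, (ε : R) * r ∈ O)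
    (hval : ∀ (P : Ideal R), P.IsPrime → P ≠ ⊥ →
      ∀ (hq : (Ideal.comap (Subring.subtype O) P).IsPrime) (a : ↥O),
        IsLocalAtom O P hq a → idealVal P (a : R) = 1) :
    InclusionIsTransferHom O := by
  refine ⟨?_, ?_, ?_⟩
  · intro r _
    obtain ⟨ε, hε⟩ := hOR r
    exact ⟨⟨_, hε⟩, ε⁻¹, by simp [mul_comm]⟩
  · intro a ha
    have hint : Algebra.IsIntegral O R := inferInstance
    exact isUnit_of_map_unit (algebraMap O R) a ha
  · intro a b c habc
    suffices h : ∃ ε : Rˣ, (ε : R) * b ∈ O ∧ (↑ε⁻¹ : R) * c ∈ O by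
      obtain ⟨ε, h1, h2⟩ := h
      refine ⟨⟨_, h1⟩, ⟨_, h2⟩, ?_, ?_, ?_⟩
      · apply Subtype.ext
        have : (ε : R) * ((ε⁻¹ : Rˣ) : R) = 1 := ε.mul_inv
        push_cast
        rw [habc]
        linear_combination (-(b * c)) * this
      · exact ⟨ε⁻¹, by simp [mul_comm]⟩
      · refine ⟨ε, ?_⟩
        have : (ε : R) * ((ε⁻¹ : Rˣ) : R) = 1 := ε.mul_inv
        linear_combination c * this
    by_cases ha : (a : R) = 0
    · rw [ha, eq_comm, mul_eq_zero] at habc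
      rcases habc with rfl | rfl
      · obtain ⟨ε, hε⟩ := hOR c
        exact ⟨ε⁻¹, by simp [O.zero_mem], by simpa using hε⟩
      · obtain ⟨ε, hε⟩ := hOR b
        exact ⟨ε, hε, by simp [O.zero_mem]⟩
    · exact inclusion_aux O hne hfg hfrac hfin hOR hval a b c ha habc

end Helpers2
section Helpers3
set_option linter.overlappingInstances false
open UniqueFactorizationMonoid

variable {R : Type*} [CommRing R] [IsDomain R] [IsDedekindDomain R]

open Classical in
/-- The class of an ideal (trivial for the zero ideal). -/
noncomputable def idealClassAux (I : Ideal R) : ClassGroup R :=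
  if h : I ∈ (Ideal R)⁰ then ClassGroup.mk0 ⟨I, h⟩ else 1

theorem idealClassAux_mul (I J : Ideal R) (hI : I ≠ ⊥) (hJ : J ≠ ⊥) :
    idealClassAux (I * J) = idealClassAux I * idealClassAux J := by
  have hI' : I ∈ (Ideal R)⁰ := mem_nonZeroDivisors_of_ne_zero hI
  have hJ' : J ∈ (Ideal R)⁰ := mem_nonZeroDivisors_of_ne_zero hJ
  have hIJ : I * J ∈ (Ideal R)⁰ := mul_mem hI' hJ'
  unfold idealClassAux
  rw [dif_pos hI', dif_pos hJ', dif_pos hIJ, ← map_mul]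
  rfl

theorem idealClassAux_eq_one (I : Ideal R) (hI : I ≠ ⊥) :
    idealClassAux I = 1 ↔ I.IsPrincipal := by
  have hI' : I ∈ (Ideal R)⁰ := mem_nonZeroDivisors_of_ne_zero hI
  unfold idealClassAux
  rw [dif_pos hI', ClassGroup.mk0_eq_one_iff]

theorem idealClassAux_prod (m : Multiset (Ideal R)) (hm : ∀ P ∈ m, Prime P) :
    (m.map idealClassAux).prod = idealClassAux m.prod := by
  induction m using Multiset.induction_on with
  | empty =>
    rw [eq_comm]
    simp only [Multiset.prod_zero, Multiset.map_zero]
    rw [idealClassAux_eq_one _ (by simp)]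
    exact ⟨1, by simp⟩
  | cons P m ih =>
    have hm' : ∀ Q ∈ m, Prime Q := fun Q hQ => hm Q (Multiset.mem_cons_of_mem hQ)
    rw [Multiset.map_cons, Multiset.prod_cons, Multiset.prod_cons, ih hm',
      idealClassAux_mul _ _ (hm P (Multiset.mem_cons_self _ _)).ne_zero
        (m.prod_ne_zero_of_prime hm')]

/-- The sequence of classes of prime divisors of `a`. -/
noncomputable def blockAux (a : R) : Multiset (ClassGroup R) :=
  (normalizedFactors (Ideal.span {a})).map idealClassAux

theorem blockAux_mul {a b : R} (ha : a ≠ 0) (hb : b ≠ 0) :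
    blockAux (a * b) = blockAux a + blockAux b := by
  unfold blockAux
  rw [← Ideal.span_singleton_mul_span_singleton, normalizedFactors_mul, Multiset.map_add]
  · simpa using ha
  · simpa using hb

theorem blockAux_one : blockAux (1 : R) = 0 := by
  unfold blockAux
  rw [Ideal.span_singleton_one, ← Ideal.one_eq_top, normalizedFactors_one, Multiset.map_zero]

theorem blockAux_assoc {a b : R} (h : Associated a b) : blockAux a = blockAux b := by
  unfold blockAux
  rw [Ideal.span_singleton_eq_span_singleton.2 h]

theorem blockAux_prod {a : R} (ha : a ≠ 0) : (blockAux a).prod = 1 := by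
  have h0 : Ideal.span {a} ≠ (⊥ : Ideal R) := by simpa using ha
  unfold blockAux
  rw [idealClassAux_prod _ (fun P hP => prime_of_normalized_factor P hP),
    Ideal.prod_normalizedFactors_eq_self h0, idealClassAux_eq_one _ h0]
  exact ⟨a, rfl⟩

theorem blockAux_eq_zero {a : R} (ha : a ≠ 0) (h : blockAux a = 0) : IsUnit a := by
  have h0 : Ideal.span {a} ≠ (⊥ : Ideal R) := by simpa using ha
  unfold blockAux at h
  rw [Multiset.map_eq_zero] at h
  have := Ideal.prod_normalizedFactors_eq_self h0
  rw [h, Multiset.prod_zero, Ideal.one_eq_top, eq_comm] at this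
  exact Ideal.span_singleton_eq_top.1 this

theorem exists_blockAux (m : Multiset (Ideal R)) (hm : ∀ P ∈ m, Prime P)
    (h : (m.map idealClassAux).prod = 1) :
    ∃ a : R, a ≠ 0 ∧ Ideal.span {a} = m.prod ∧ blockAux a = m.map idealClassAux := by
  have h0 : m.prod ≠ ⊥ := m.prod_ne_zero_of_prime hm
  rw [idealClassAux_prod m hm, idealClassAux_eq_one _ h0] at h
  obtain ⟨a, ha⟩ := h
  have ha' : Ideal.span {a} = m.prod := ha.symm
  refine ⟨a, ?_, ha', ?_⟩
  · rintro rfl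
    apply h0
    rw [← ha']; simp
  · unfold blockAux
    rw [ha', normalizedFactors_prod_of_prime hm]

theorem map_split_aux {α β : Type*} (f : α → β) (s : Multiset α) (a b : Multiset β)
    (h : s.map f = a + b) : ∃ s₁ s₂, s = s₁ + s₂ ∧ s₁.map f = a ∧ s₂.map f = b := by
  have h1 : Multiset.Rel (fun x y => f x = y) s (a + b) := by
    have := Multiset.rel_eq.2 h
    rwa [Multiset.rel_map_left] at this
  obtain ⟨s₁, s₂, h2, h3, h4⟩ := Multiset.rel_add_right.1 h1
  refine ⟨s₁, s₂, h4, ?_, ?_⟩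
  · rw [← Multiset.rel_eq, Multiset.rel_map_left]; exact h2
  · rw [← Multiset.rel_eq, Multiset.rel_map_left]; exact h3

/-- The transfer homomorphism to the block monoid. -/
noncomputable def blockHomAux (O : Subring R) :
    ↥(nonZeroDivisors ↥O) →* ↥(BlockMonoid (ClassGroup R)) where
  toFun u := ⟨Multiplicative.ofAdd (blockAux ((u : O) : R)), by
    have : ((u : O) : R) ≠ 0 := by
      have := nonZeroDivisors.ne_zero u.2
      simpa using this
    exact blockAux_prod this⟩
  map_one' := by
    apply Subtype.ext
    change Multiplicative.ofAdd (blockAux (1 : R)) = 1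
    rw [blockAux_one]; rfl
  map_mul' u v := by
    have hu : ((u : O) : R) ≠ 0 := by
      have := nonZeroDivisors.ne_zero u.2
      simpa using this
    have hv : ((v : O) : R) ≠ 0 := by
      have := nonZeroDivisors.ne_zero v.2
      simpa using this
    apply Subtype.ext
    change Multiplicative.ofAdd (blockAux (((u : O) : R) * ((v : O) : R))) = _
    rw [blockAux_mul hu hv]; rfl

theorem blockHomAux_eq (O : Subring R) (u : ↥(nonZeroDivisors ↥O))
    (b : ↥(BlockMonoid (ClassGroup R)))
    (h : blockAux ((u : O) : R) = Multiplicative.toAdd (b : Multiplicative (Multiset _))) :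
    blockHomAux O u = b := by
  apply Subtype.ext
  change Multiplicative.ofAdd (blockAux ((u : O) : R)) = _
  rw [h]; rfl

theorem blockHom_transfer_aux (O : Subring R) (hO : InclusionIsTransferHom O)
    (hcls : ∀ c : ClassGroup R, ∃ (P : Ideal R) (hP : P ∈ (Ideal R)⁰),
      P.IsPrime ∧ ¬ O.conductor ≤ P ∧ ClassGroup.mk0 ⟨P, hP⟩ = c)
    (hOR : ∀ r : R, ∃ ε : Rˣ, (ε : R) * r ∈ O) :
    IsTransferHom (blockHomAux O) := by
  have hnz : ∀ u : ↥(nonZeroDivisors ↥O), ((u : O) : R) ≠ 0 := by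
    intro u
    have := nonZeroDivisors.ne_zero u.2
    simpa using this
  have hmk : ∀ v : O, (v : R) ≠ 0 → v ∈ nonZeroDivisors O := by
    intro v hv
    apply mem_nonZeroDivisors_of_ne_zero
    rintro rfl
    exact hv rfl
  refine ⟨?_, ?_, ?_⟩
  · intro b
    choose F hF hFp _ hFc using hcls
    have hFcl : ∀ c, idealClassAux (F c) = c := by
      intro c
      unfold idealClassAux
      rw [dif_pos (hF c), hFc]
    let m : Multiset (Ideal R) := (Multiplicative.toAdd b.1).map F
    have hm : m.map idealClassAux = Multiplicative.toAdd b.1 := by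
      simp only [m, Multiset.map_map, Function.comp_def, hFcl, Multiset.map_id']
    have hmp : ∀ P ∈ m, Prime P := by
      intro P hP
      obtain ⟨c, -, rfl⟩ := Multiset.mem_map.1 hP
      exact (Ideal.prime_iff_isPrime (nonZeroDivisors.ne_zero (hF c))).2 (hFp c)
    obtain ⟨a, ha, -, hab⟩ := exists_blockAux m hmp (by rw [hm]; exact b.2)
    obtain ⟨ε, hε⟩ := hOR a
    refine ⟨⟨⟨_, hε⟩, hmk _ (mul_ne_zero ε.ne_zero ha)⟩, 1, ?_⟩
    rw [Units.val_one, mul_one, eq_comm]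
    apply blockHomAux_eq
    rw [← hm, ← hab]
    exact blockAux_assoc ⟨ε⁻¹, by simp [mul_comm]⟩
  · intro u hu
    have h1 : blockAux ((u : O) : R) = 0 := by
      obtain ⟨c, hc⟩ := isUnit_iff_exists_inv.1 hu
      have h2 : blockAux ((u : O) : R) + Multiplicative.toAdd c.1 = 0 :=
        congrArg (fun z => Multiplicative.toAdd (Subtype.val z)) hc
      exact (add_eq_zero.1 h2).1
    have h2 : IsUnit (u : O) := hO.2.1 _ (blockAux_eq_zero (hnz u) h1)
    obtain ⟨c, hc⟩ := isUnit_iff_exists_inv.1 h2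
    have hc0 : c ∈ nonZeroDivisors O := by
      apply mem_nonZeroDivisors_of_ne_zero
      rintro rfl
      simp at hc
    exact isUnit_iff_exists_inv.2 ⟨⟨c, hc0⟩, Subtype.ext hc⟩
  · intro u b c hubc
    have h1 : blockAux ((u : O) : R) = Multiplicative.toAdd b.1 + Multiplicative.toAdd c.1 :=
      congrArg (fun z => Multiplicative.toAdd (Subtype.val z)) hubc
    obtain ⟨s₁, s₂, hs, hs₁, hs₂⟩ := map_split_aux _ _ _ _ h1
    have hsp : ∀ P ∈ s₁ + s₂, Prime P := by
      rw [← hs]; exact fun P hP => prime_of_normalized_factor P hP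
    obtain ⟨x, hx, hxs, hxb⟩ := exists_blockAux s₁
      (fun P hP => hsp P (Multiset.mem_add.2 (Or.inl hP))) (by rw [hs₁]; exact b.2)
    obtain ⟨y, hy, hys, hyb⟩ := exists_blockAux s₂
      (fun P hP => hsp P (Multiset.mem_add.2 (Or.inr hP))) (by rw [hs₂]; exact c.2)
    have h0 : Ideal.span {((u : O) : R)} ≠ (⊥ : Ideal R) := by
      simpa using (hnz u)
    have hspan : Ideal.span {x * y} = Ideal.span {((u : O) : R)} := by
      rw [← Ideal.span_singleton_mul_span_singleton, hxs, hys, ← Multiset.prod_add, ← hs,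
        Ideal.prod_normalizedFactors_eq_self h0]
    obtain ⟨ε, hε⟩ := Ideal.span_singleton_eq_span_singleton.1 hspan
    obtain ⟨v, w, hvw, hv, hw⟩ := hO.2.2 (u : O) x (y * ε) (by rw [← hε]; ring)
    have hw' : Associated (w : R) y := hw.trans ⟨ε⁻¹, by simp [mul_assoc]⟩
    refine ⟨⟨v, hmk v (hv.symm.ne_zero_iff.1 hx)⟩, ⟨w, hmk w (hw'.symm.ne_zero_iff.1 hy)⟩,
      Subtype.ext hvw, ?_, ?_⟩
    · refine Associated.of_eq (blockHomAux_eq O _ b ?_)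
      rw [← hs₁, ← hxb]
      exact blockAux_assoc hv
    · refine Associated.of_eq (blockHomAux_eq O _ c ?_)
      rw [← hs₂, ← hyb]
      exact blockAux_assoc hw'

end Helpers3

theorem characterization_gives_transfer_hom
    {R : Type*} [CommRing R] [IsDomain R] [IsDedekindDomain R]
    (O : Subring R) (hne : O ≠ ⊤) (hfg : Module.Finite ↥O R)
    (hfrac : ∀ r : R, ∃ a b : ↥O, (b : R) ≠ 0 ∧ (b : R) * r = (a : R))
    (htor : ∀ c : ClassGroup R, ∃ n : ℕ, 0 < n ∧ c ^ n = 1)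
    (hfin : Finite (R ⧸ O.conductor))
    (hcls : ∀ c : ClassGroup R, ∃ (P : Ideal R) (hP : P ∈ (Ideal R)⁰),
      P.IsPrime ∧ ¬ O.conductor ≤ P ∧ ClassGroup.mk0 ⟨P, hP⟩ = c)
    (hcard : Nat.card (ClassGroup R) ≠ 2)
    (hOR : ∀ r : R, ∃ ε : Rˣ, (ε : R) * r ∈ O)
    (hval : ∀ (P : Ideal R), P.IsPrime → P ≠ ⊥ →
      ∀ (hq : (Ideal.comap (Subring.subtype O) P).IsPrime) (a : ↥O),
        IsLocalAtom O P hq a → idealVal P (a : R) = 1) :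
    InclusionIsTransferHom O ∧
    ∃ θ : ↥(nonZeroDivisors ↥O) →* ↥(BlockMonoid (ClassGroup R)), IsTransferHom θ := by
  have hO := inclusion_transfer_aux O hne hfg hfrac hfin hOR hval
  exact ⟨hO, blockHomAux O, blockHom_transfer_aux O hO hcls hOR⟩
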